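/- arXiv:2406.05753 — 3 statements merged into one kernel-verified Lean document; each statement's English description precedes it below -/
import Mathlib

section
/- Let x, x', t, t' ∈ EuclideanSpace ℝ (Fin n) and let R, R' be linear isometry equivalences of EuclideanSpace ℝ (Fin n). Then R⁻¹(x − t) = R'⁻¹(x' − t') if and only if there exist a linear isometry equivalence Q of ℝⁿ and s ∈ ℝⁿ such that x' = Q x + s, t' = Q t + s, and R' = Q ∘ R. That is, the SE(n) attribute a(x, (t, R)) = R⁻¹(x − t) is a complete invariant of the simultaneous SE(n) action on coordinate–pose pairs. -/
/-!
Rigid motions act transitively on poses and preserve the attribute, so one may move the first pose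
onto the second. At a fixed pose the attribute determines the coordinate.
-/

section PoseAttribute

variable {𝕜 E E' F : Type*} [Semiring 𝕜]
  [SeminormedAddCommGroup E] [SeminormedAddCommGroup E'] [SeminormedAddCommGroup F]
  [Module 𝕜 E] [Module 𝕜 E'] [Module 𝕜 F]

/-- The attribute `a(x, (t, R)) = R⁻¹ (x - t)`: the coordinate `x` as seen from the pose `(t, R)`.
The space `F` of the moving frame is allowed to differ from the ambient space `E`. -/
def poseAttribute (x t : E) (R : F ≃ₗᵢ[𝕜] E) : F :=
  R.symm (x - t)

theorem poseAttribute_inj {x y t : E} {R : F ≃ₗᵢ[𝕜] E} :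
    poseAttribute x t R = poseAttribute y t R ↔ x = y :=
  R.symm.injective.eq_iff.trans sub_left_inj

theorem poseAttribute_rigidMotion (Q : E ≃ₗᵢ[𝕜] E') (s : E') (x t : E) (R : F ≃ₗᵢ[𝕜] E) :
    poseAttribute (Q x + s) (Q t + s) (R.trans Q) = poseAttribute x t R :=
  calc
    (R.trans Q).symm (Q x + s - (Q t + s)) = R.symm (Q.symm (Q (x - t))) := by
      rw [add_sub_add_right_eq_sub, ← map_sub, LinearIsometryEquiv.symm_trans,
        LinearIsometryEquiv.trans_apply]
    _ = R.symm (x - t) := by rw [LinearIsometryEquiv.symm_apply_apply]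

theorem exists_rigidMotion_pose_eq (t : E) (t' : E') (R : F ≃ₗᵢ[𝕜] E) (R' : F ≃ₗᵢ[𝕜] E') :
    ∃ (Q : E ≃ₗᵢ[𝕜] E') (s : E'), t' = Q t + s ∧ R' = R.trans Q := by
  refine ⟨R.symm.trans R', t' - R' (R.symm t), (add_sub_cancel _ _).symm, ?_⟩
  rw [LinearIsometryEquiv.trans_assoc, LinearIsometryEquiv.self_trans_symm,
    LinearIsometryEquiv.refl_trans]

theorem se_n_attribute_complete_general (x t : E) (x' t' : E')
    (R : F ≃ₗᵢ[𝕜] E) (R' : F ≃ₗᵢ[𝕜] E') :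
    poseAttribute x t R = poseAttribute x' t' R' ↔
      ∃ (Q : E ≃ₗᵢ[𝕜] E') (s : E'), x' = Q x + s ∧ t' = Q t + s ∧ R' = R.trans Q := by
  constructor
  · intro h
    obtain ⟨Q, s, rfl, rfl⟩ := exists_rigidMotion_pose_eq t t' R R'
    rw [← poseAttribute_rigidMotion Q s x t R, poseAttribute_inj] at h
    exact ⟨Q, s, h.symm, rfl, rfl⟩
  · rintro ⟨Q, s, rfl, rfl, rfl⟩
    exact (poseAttribute_rigidMotion Q s x t R).symm

end PoseAttribute

/-- The SE(n) attribute `a(x, (t, R)) = R⁻¹ (x - t)` is a complete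
invariant of the simultaneous SE(n) action on coordinate–pose pairs. -/
theorem se_n_attribute_complete {n : ℕ} (x x' t t' : EuclideanSpace ℝ (Fin n))
    (R R' : EuclideanSpace ℝ (Fin n) ≃ₗᵢ[ℝ] EuclideanSpace ℝ (Fin n)) :
    R.symm (x - t) = R'.symm (x' - t') ↔
      ∃ (Q : EuclideanSpace ℝ (Fin n) ≃ₗᵢ[ℝ] EuclideanSpace ℝ (Fin n))
        (s : EuclideanSpace ℝ (Fin n)),
        x' = Q x + s ∧ t' = Q t + s ∧ R' = R.trans Q :=
  se_n_attribute_complete_general x t x' t' R R'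
end

section
/- Let G be a group acting on a measurable space X with measure μ such that each map x ↦ g • x is measurable and measure-preserving, acting also on a latent type Z, and let F : X → Z → E (E a real normed vector space) satisfy the steerability property F(g⁻¹ • x, z) = F(x, g • z). Define the loss L(f, z) := ∫⁻ ‖f(x) − F(x, z)‖₊² dμ(x). Then the set of loss minimizers is equivariant: for every measurable f : X → E, every g ∈ G, and every z ∈ Z, z minimizes L(f, ·) over Z (i.e. ∀ z', L(f, z) ≤ L(f, z')) if and only if g • z minimizes L(L_g f, ·) over Z, where (L_g f)(x) := f(g⁻¹ • x). -/
open MeasureTheory ENNReal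

/-- A field `F` with latent variable in `Z` is *steerable* under `G` if moving its argument by `g⁻¹`
amounts to moving its latent by `g`. -/
def IsSteerable (G : Type*) {X Z E : Type*} [Inv G] [SMul G X] [SMul G Z] (F : X → Z → E) : Prop :=
  ∀ (g : G) (x : X) (z : Z), F (g⁻¹ • x) z = F x (g • z)

/-- The reconstruction loss of the latent `z` for the field `f`, for an arbitrary pointwise
discrepancy `ℓ`; the squared-error loss is the case `ℓ a b = ‖a - b‖₊ ^ 2`. -/
noncomputable def reconstructionLoss {X Z D E : Type*} [MeasurableSpace X] (μ : Measure X)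
    (ℓ : D → E → ℝ≥0∞) (F : X → Z → E) (f : X → D) (z : Z) : ℝ≥0∞ :=
  ∫⁻ x, ℓ (f x) (F x z) ∂μ

theorem IsSteerable.reconstructionLoss_smul {G X Z D E : Type*} [Group G] [MulAction G X]
    [SMul G Z] [MeasurableSpace X] [MeasurableConstSMul G X] {μ : Measure X}
    [SMulInvariantMeasure G X μ] {F : X → Z → E} (hF : IsSteerable G F) (ℓ : D → E → ℝ≥0∞)
    (f : X → D) (g : G) (z : Z) :
    reconstructionLoss μ ℓ F (fun x => f (g⁻¹ • x)) (g • z) = reconstructionLoss μ ℓ F f z :=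
  calc
    ∫⁻ x, ℓ (f (g⁻¹ • x)) (F x (g • z)) ∂μ = ∫⁻ x, ℓ (f (g⁻¹ • x)) (F (g⁻¹ • x) z) ∂μ := by
      simp only [hF g]
    _ = ∫⁻ x, ℓ (f x) (F x z) ∂μ :=
      (measurePreserving_smul g⁻¹ μ).lintegral_comp_emb (measurableEmbedding_const_smul g⁻¹)
        fun x => ℓ (f x) (F x z)

theorem loss_minimizers_equivariant_general {G X Z D E : Type*} [Group G] [MulAction G X]
    [MeasurableSpace X] [MulAction G Z] (μ : Measure X)
    (hmp : ∀ g : G, MeasurePreserving (fun x : X => g • x) μ μ) (ℓ : D → E → ℝ≥0∞)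
    (F : X → Z → E) (hF : IsSteerable G F) (f : X → D) (g : G) (z : Z) :
    (∀ z' : Z, reconstructionLoss μ ℓ F f z ≤ reconstructionLoss μ ℓ F f z') ↔
      ∀ z' : Z, reconstructionLoss μ ℓ F (fun x => f (g⁻¹ • x)) (g • z) ≤
        reconstructionLoss μ ℓ F (fun x => f (g⁻¹ • x)) z' := by
  have : MeasurableConstSMul G X := ⟨fun g => (hmp g).measurable⟩
  have : SMulInvariantMeasure G X μ :=
    ⟨fun g _ hs => (hmp g).measure_preimage hs.nullMeasurableSet⟩
  refine Iff.trans ?_ (MulAction.surjective g).forall.symm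
  simp only [hF.reconstructionLoss_smul]

/-- With a steerable field `F` and measure-preserving group action,
the set of minimizers of the reconstruction loss is equivariant:
`z` minimizes `L(f, ·)` iff `g • z` minimizes `L(L_g f, ·)`. -/
theorem loss_minimizers_equivariant {G X Z E : Type*} [Group G] [MulAction G X]
    [MeasurableSpace X] [MulAction G Z] [NormedAddCommGroup E] [MeasurableSpace E]
    (μ : Measure X)
    (hmp : ∀ g : G, MeasurePreserving (fun x : X => g • x) μ μ)
    (F : X → Z → E)
    (hsteer : ∀ (g : G) (x : X) (z : Z), F (g⁻¹ • x) z = F x (g • z))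
    (f : X → E) (hf : Measurable f) (g : G) (z : Z) :
    let L : (X → E) → Z → ℝ≥0∞ := fun f z => ∫⁻ x, (‖f x - F x z‖₊ : ℝ≥0∞) ^ 2 ∂μ
    let Lg : (X → E) → X → E := fun f x => f (g⁻¹ • x)
    (∀ z' : Z, L f z ≤ L f z') ↔ (∀ z' : Z, L (Lg f) (g • z) ≤ L (Lg f) z') := by
  exact loss_minimizers_equivariant_general μ hmp (fun a b => (‖a - b‖₊ : ℝ≥0∞) ^ 2) F hsteer f g z
end

section
/- Let G be a group acting on a type X, let N ≥ 1, poses p : Fin N → G, contexts c : Fin N → C, and let S : X → (Fin N → G) → Finset (Fin N) be a selection rule (e.g. k-nearest-neighbour selection) that is nonempty-valued and bi-invariant: S(g • x, g • p) = S(x, p) for all g, x, p, where (g • p) i := g * (p i). With logits ℓ_i(x, p) = ⟪q((p i)⁻¹ • x), k(c i)⟫ + μ((p i)⁻¹ • x), define the truncated attention att_i(x, p) = exp(ℓ_i(x, p)) / Σ_{j ∈ S(x, p)} exp(ℓ_j(x, p)) for i ∈ S(x, p), and the truncated field f(x; p, c) = W_o(Σ_{i ∈ S(x, p)} att_i(x,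 p) • v((p i)⁻¹ • x, c i)), where q : X → EuclideanSpace ℝ (Fin d_k), k : C → EuclideanSpace ℝ (Fin d_k), μ : X → ℝ, v : X → C → F with F a real normed vector space, and W_o : F →ₗ[ℝ] V linear. Then the truncated field is steerable: for all g ∈ G and x ∈ X, f(g⁻¹ • x; p, c) = f(x; g • p, c). -/
open RealInnerProductSpace

section Biinvariance

variable {G X P Y Z W : Type*}

/-- Bi-invariance of a map of a coordinate `x : X` and a pose object `p : P`: it does not change
when one group element acts on both arguments. Selection rules and attributes are instances with
`P = ι → G`, on which `G` acts by left multiplication of every pose. -/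
def IsBiinvariant (G : Type*) [SMul G X] [SMul G P] (f : X → P → Y) : Prop :=
  ∀ (g : G) (x : X) (p : P), f (g • x) (g • p) = f x p

theorem IsBiinvariant.map₂ [SMul G X] [SMul G P] {f : X → P → Y} {h : X → P → Z}
    (hf : IsBiinvariant G f) (hh : IsBiinvariant G h) (Φ : Y → Z → W) :
    IsBiinvariant G fun x p => Φ (f x p) (h x p) :=
  fun g x p => congrArg₂ Φ (hf g x p) (hh g x p)

theorem IsBiinvariant.inv_smul_left [Group G] [MulAction G X] [SMul G P] {f : X → P → Y}
    (hf : IsBiinvariant G f) (g : G) (x : X) (p : P) : f (g⁻¹ • x) p = f x (g • p) := by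
  rw [← hf g (g⁻¹ • x) p, smul_inv_smul]

end Biinvariance

section Attention

variable {G X C F V ι : Type*}

/-- The family of geometric attributes `a(x, p i) = (p i)⁻¹ • x` of a coordinate relative to a
pose family. -/
def geometricAttributes [Inv G] [SMul G X] (x : X) (p : ι → G) : ι → X :=
  fun i => (p i)⁻¹ • x

theorem isBiinvariant_geometricAttributes [Group G] [MulAction G X] :
    IsBiinvariant G (geometricAttributes : X → (ι → G) → ι → X) := by
  intro g x p
  funext i
  calc (g * p i)⁻¹ • g • x = (p i)⁻¹ • g⁻¹ • g • x := by rw [mul_inv_rev, mul_smul]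
    _ = (p i)⁻¹ • x := by rw [inv_smul_smul]

/-- The softmax weights of the logits `ℓ`, normalized over the finite set `s`; meaningful at
indices in `s`. -/
noncomputable def softmaxOn (s : Finset ι) (ℓ : ι → ℝ) (i : ι) : ℝ :=
  Real.exp (ℓ i) / ∑ j ∈ s, Real.exp (ℓ j)

variable [AddCommMonoid F] [Module ℝ F]

/-- Cross-attention to the latents in `s` with contexts `c`, as a function of `s` and the attributes
`a` alone: the coordinate and the poses enter a field only through these two, and both are
bi-invariant. -/
noncomputable def crossAttention (logit : X → C → ℝ) (v : X → C → F) (W : F → V) (c : ι → C)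
    (s : Finset ι) (a : ι → X) : V :=
  W (∑ i ∈ s, softmaxOn s (fun j => logit (a j) (c j)) i • v (a i) (c i))

/-- The cross-attention field of the latent point cloud `(p, c)`, truncated at each coordinate to
the latents chosen by the selection rule `S`. -/
noncomputable def truncatedField [Inv G] [SMul G X] (S : X → (ι → G) → Finset ι)
    (logit : X → C → ℝ) (v : X → C → F) (W : F → V) (c : ι → C) (x : X) (p : ι → G) : V :=
  crossAttention logit v W c (S x p) (geometricAttributes x p)

theorem isBiinvariant_truncatedField [Group G] [MulAction G X] {S : X → (ι → G) → Finset ι}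
    (hS : IsBiinvariant G S) (logit : X → C → ℝ) (v : X → C → F) (W : F → V) (c : ι → C) :
    IsBiinvariant G (truncatedField S logit v W c) :=
  hS.map₂ isBiinvariant_geometricAttributes (crossAttention logit v W c)

theorem truncated_enf_steerable_general [Group G] [MulAction G X] {S : X → (ι → G) → Finset ι}
    (hS : IsBiinvariant G S) (logit : X → C → ℝ) (v : X → C → F) (W : F → V) (c : ι → C)
    (g : G) (x : X) (p : ι → G) :
    truncatedField S logit v W c (g⁻¹ • x) p = truncatedField S logit v W c x (g • p) :=
  (isBiinvariant_truncatedField hS logit v W c).inv_smul_left g x p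

end Attention

/-- A cross-attention field truncated by a nonempty-valued,
bi-invariant selection rule `S` (e.g. k-nearest-neighbour selection) is still
steerable: `f(g⁻¹ • x; p, c) = f(x; g • p, c)`. -/
theorem truncated_enf_steerable {G X C F V : Type*} [Group G] [MulAction G X]
    [NormedAddCommGroup F] [NormedSpace ℝ F] [AddCommGroup V] [Module ℝ V]
    {N dk : ℕ} (hN : 1 ≤ N)
    (p : Fin N → G) (c : Fin N → C)
    (S : X → (Fin N → G) → Finset (Fin N))
    (hS_nonempty : ∀ (x : X) (p : Fin N → G), (S x p).Nonempty)
    (hS_biinv : ∀ (g : G) (x : X) (p : Fin N → G),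
      S (g • x) (fun i => g * p i) = S x p)
    (q : X → EuclideanSpace ℝ (Fin dk)) (k : C → EuclideanSpace ℝ (Fin dk))
    (μ : X → ℝ) (v : X → C → F) (Wo : F →ₗ[ℝ] V) :
    let ℓ : X → (Fin N → G) → Fin N → ℝ := fun x p i =>
      ⟪q ((p i)⁻¹ • x), k (c i)⟫ + μ ((p i)⁻¹ • x)
    let att : X → (Fin N → G) → Fin N → ℝ := fun x p i =>
      Real.exp (ℓ x p i) / ∑ j ∈ S x p, Real.exp (ℓ x p j)
    let f : X → (Fin N → G) → V := fun x p =>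
      Wo (∑ i ∈ S x p, att x p i • v ((p i)⁻¹ • x) (c i))
    ∀ (g : G) (x : X), f (g⁻¹ • x) p = f x (fun i => g * p i) := by
  intro ℓ att f g x
  exact truncated_enf_steerable_general hS_biinv (fun a b => ⟪q a, k b⟫ + μ a) v Wo c g x p
end
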